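/- Let $\underline{a}=\{a_n\}_{n=0}^\infty$ be an increasing sequence of non-negative integers, and put $x_n = 3^{-(a_n+1)}$ (viewed as an element of $\mathbb{T}=\mathbb{R}/\mathbb{Z}$ via the canonical projection). The set $K_{\underline{a},3} = \{0\} \cup \{\pm x_n \mid n \in \mathbb{N}\}$ is quasi-convex in $\mathbb{T}$ if and only if the following two conditions hold: (i) $a_0 > 0$; (ii) the gaps $g_n = a_{n+1} - a_n$ satisfy $g_n > 1$ for all $n \in \mathbb{N}$. -/

import Mathlib

/-! Everything is expressed through the norm of `ℝ/ℤ` (distance to `0`), for which `𝕋₊` is the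
closed ball of radius `1/4` (`mem_Tplus_iff`). Write `xₙ = 3^{-(aₙ+1)}`.

Necessity. If `a₀ = 0` then `x₀ = 1/3`, and a character in the polar must kill `x₀`; hence
`x₀ + x₁` lies in the hull, although its norm exceeds `1/3`. If `a_{n+1} = aₙ + 1` then
`xₙ = 3 x_{n+1}`; from `‖χ x_{n+1}‖ ≤ 1/4` and `‖3 χ x_{n+1}‖ ≤ 1/4` one gets
`‖χ x_{n+1}‖ ≤ 1/12` (the exceptional values `± 1/4` are excluded because `χ x_{n+1}` is
`3`-power torsion), so `2 x_{n+1}` lies in the hull. Neither point belongs to the set.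

Sufficiency. For `j ∉ {aₙ}` the character `2·3^j` lies in the polar, and so does `3^j`. So a point
`x` of the hull satisfies `‖3^j x‖ ≤ 1/8` for those `j`. Since `aₙ ± 1` are not values of `a`, the
point `3^{aₙ-1} x` is within `1/72` of `cₙ/9` for some `cₙ ∈ {-1, 0, 1}` (`digit`); the `cₙ` are
the balanced ternary digits of `x`. For `n < l` and a sign `ε` the character
`2·3^{aₙ-1} + 2ε·3^{aₗ-1}` lies in the polar too; if `cₙ, cₗ ≠ 0`, the sign `ε = cₙ cₗ` moves `x`
to within `1/18` of `± 4/9`, outside `𝕋₊`. So at most one `cₙ` is nonzero, and then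
`z = x - cₙ xₙ` (or `z = x`) satisfies `‖3^j z‖ < 1/4` for every `j`, which forces `z = 0`
(`eq_zero_of_forall_pow`). -/

noncomputable section

/-- The circle group `𝕋 = ℝ/ℤ`. -/
abbrev Circle1 : Type := AddCircle (1 : ℝ)

/-- The canonical projection `π : ℝ → 𝕋`. -/
def circleProj (r : ℝ) : Circle1 := (r : Circle1)

/-- `𝕋₊ = π([-1/4, 1/4])`. -/
def Tplus : Set Circle1 := circleProj '' Set.Icc (-(1/4) : ℝ) (1/4)

/-- The polar `E^▷` of a set `E ⊆ G`: all continuous characters mapping `E` into `𝕋₊`. -/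
def polar {G : Type} [AddCommGroup G] [TopologicalSpace G] (E : Set G) :
    Set (G →+ Circle1) :=
  {χ | Continuous χ ∧ ∀ x ∈ E, χ x ∈ Tplus}

/-- The quasi-convex hull `Q_G(E) = E^▷◁`. -/
def qcHull {G : Type} [AddCommGroup G] [TopologicalSpace G] (E : Set G) : Set G :=
  {x | ∀ χ ∈ polar E, χ x ∈ Tplus}

/-- A set is quasi-convex if it coincides with its quasi-convex hull. -/
def IsQuasiConvex {G : Type} [AddCommGroup G] [TopologicalSpace G] (E : Set G) : Prop :=
  qcHull E = E

/-! ### The norm on the circle -/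

lemma exists_lift (y : Circle1) : ∃ t : ℝ, (t : Circle1) = y ∧ |t| = ‖y‖ := by
  induction y using QuotientAddGroup.induction_on with
  | H r =>
    refine ⟨r - round r, ?_, (UnitAddCircle.norm_eq (x := r)).symm⟩
    have h : ((round r : ℝ) : Circle1) = 0 := by
      rw [AddCircle.coe_eq_zero_iff]; exact ⟨round r, by simp⟩
    rw [AddCircle.coe_sub, h, sub_zero]

lemma norm_coe_of_le {t : ℝ} (h : |t| ≤ 1 / 2) : ‖(t : Circle1)‖ = |t| := by
  rw [AddCircle.norm_coe_eq_abs_iff (1 : ℝ) one_ne_zero]; simpa using h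

lemma norm_coe_le (t : ℝ) : ‖(t : Circle1)‖ ≤ |t| := by
  rw [UnitAddCircle.norm_eq]
  simpa using round_le t 0

lemma mem_Tplus_iff (y : Circle1) : y ∈ Tplus ↔ ‖y‖ ≤ 1 / 4 := by
  constructor
  · rintro ⟨t, ht, rfl⟩
    exact (norm_coe_le t).trans (abs_le.2 ⟨by linarith [ht.1], ht.2⟩)
  · intro h
    obtain ⟨t, rfl, ht⟩ := exists_lift y
    rw [← ht, abs_le] at h
    exact ⟨t, ⟨by linarith [h.1], h.2⟩, rfl⟩

/-- Tripling does not wrap around as long as the point stays within `1/4` of `0`. -/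
lemma norm_three {y : Circle1} (h : ‖y‖ ≤ 1 / 4) (h3 : ‖(3 : ℤ) • y‖ < 1 / 4) :
    ‖(3 : ℤ) • y‖ = 3 * ‖y‖ := by
  obtain ⟨t, rfl, ht⟩ := exists_lift y
  rw [← ht] at h ⊢
  rw [← AddCircle.coe_zsmul] at h3 ⊢
  have e : (3 : ℤ) • t = 3 * t := by simp
  rw [e] at h3 ⊢
  have key : |3 * t| ≤ 1 / 2 := by
    rw [UnitAddCircle.norm_eq] at h3
    by_contra! hc
    -- The integer nearest to `3t` has absolute value at most `3/4 + 1/4`, strictly, so it is `0`.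
    have hr : round (3 * t) = 0 := by
      rw [abs_lt] at h3
      rw [abs_le] at h
      have h1 : (round (3 * t) : ℝ) < 1 := by linarith
      have h2 : (-1 : ℝ) < round (3 * t) := by linarith
      have h1' : round (3 * t) < 1 := by exact_mod_cast h1
      have h2' : -1 < round (3 * t) := by exact_mod_cast h2
      omega
    rw [hr] at h3
    simp only [Int.cast_zero, sub_zero] at h3
    linarith
  rw [norm_coe_of_le key, abs_mul]
  norm_num

lemma eq_zero_of_forall_pow {z : Circle1} (h : ∀ j : ℕ, ‖(3 ^ j : ℤ) • z‖ < 1 / 4) : z = 0 := by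
  have hp : ∀ j : ℕ, ‖(3 ^ j : ℤ) • z‖ = 3 ^ j * ‖z‖ := by
    intro j
    induction j with
    | zero => simp
    | succ j ih =>
      have hj := h (j + 1)
      rw [pow_succ', mul_smul] at hj ⊢
      rw [norm_three (h j).le hj, ih, pow_succ']
      ring
  by_contra hz
  have hpos : 0 < ‖z‖ := norm_pos_iff.2 hz
  obtain ⟨n, hn⟩ := pow_unbounded_of_one_lt (1 / ‖z‖) (by norm_num : (1 : ℝ) < 3)
  rw [div_lt_iff₀ hpos] at hn
  linarith [h n, hp n]

/-- Extraction of a balanced ternary digit. -/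
lemma digit {y : Circle1} (h : ‖y‖ ≤ 1 / 8) (h9 : ‖(9 : ℤ) • y‖ ≤ 1 / 8) :
    ∃ c : ℤ, (c = 0 ∨ c = 1 ∨ c = -1) ∧ ‖y - (((c : ℝ) / 9 : ℝ) : Circle1)‖ ≤ 1 / 72 := by
  obtain ⟨t, rfl, ht⟩ := exists_lift y
  rw [← ht, abs_le] at h
  have e : (9 : ℤ) • t = 9 * t := by simp
  rw [← AddCircle.coe_zsmul, e, UnitAddCircle.norm_eq, abs_le] at h9
  refine ⟨round (9 * t), ?_, ?_⟩
  · have h1 : (round (9 * t) : ℝ) < 2 := by linarith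
    have h2 : (-2 : ℝ) < round (9 * t) := by linarith
    have h1' : round (9 * t) < 2 := by exact_mod_cast h1
    have h2' : -2 < round (9 * t) := by exact_mod_cast h2
    omega
  · rw [← AddCircle.coe_sub]
    refine (norm_coe_le _).trans (abs_le.2 ⟨?_, ?_⟩) <;> linarith

/-! ### The points `3^{-k}` and the set `K_{a,3}` -/

/-- The point `3^{-k}` of `𝕋`. -/
def pt (k : ℕ) : Circle1 := circleProj (((3 : ℝ) ^ k)⁻¹)

lemma pow_smul_pt (j k : ℕ) : (3 ^ j : ℤ) • pt (j + k) = pt k := by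
  unfold pt circleProj
  rw [← AddCircle.coe_zsmul]
  congr 1
  rw [zsmul_eq_mul, pow_add]
  push_cast
  field_simp

lemma pt_zero : pt 0 = 0 := by
  unfold pt circleProj
  rw [AddCircle.coe_eq_zero_iff]
  exact ⟨1, by simp⟩

lemma norm_pt {k : ℕ} (hk : 1 ≤ k) : ‖pt k‖ = ((3 : ℝ) ^ k)⁻¹ := by
  have h3 : (3 : ℝ) ≤ 3 ^ k := by simpa using pow_le_pow_right₀ (by norm_num : (1 : ℝ) ≤ 3) hk
  have hp : (0 : ℝ) < (3 ^ k)⁻¹ := by positivity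
  have h : ((3 : ℝ) ^ k)⁻¹ ≤ 3⁻¹ := inv_anti₀ (by norm_num) h3
  unfold pt circleProj
  rw [norm_coe_of_le (by rw [abs_of_pos hp]; linarith), abs_of_pos hp]

lemma norm_pt_le {d k : ℕ} (hd : 1 ≤ d) (hk : d ≤ k) : ‖pt k‖ ≤ ((3 : ℝ) ^ d)⁻¹ := by
  rw [norm_pt (hd.trans hk)]
  exact inv_anti₀ (by positivity) (pow_le_pow_right₀ (by norm_num) hk)

lemma pow_smul_pt_of_le {j k : ℕ} (h : k ≤ j) : (3 ^ j : ℤ) • pt k = 0 := by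
  obtain ⟨d, rfl⟩ := Nat.exists_eq_add_of_le' h
  have := pow_smul_pt k 0
  rw [add_zero, pt_zero] at this
  rw [pow_add, mul_smul, this, smul_zero]

lemma norm_pow_smul_pt_le {j k d : ℕ} (hd : 1 ≤ d) (h : j + d ≤ k) :
    ‖(3 ^ j : ℤ) • pt k‖ ≤ ((3 : ℝ) ^ d)⁻¹ := by
  obtain ⟨e, rfl⟩ := Nat.exists_eq_add_of_le (show j ≤ k by omega)
  rw [pow_smul_pt]
  exact norm_pt_le hd (by omega)

lemma norm_two_smul_le (y : Circle1) : ‖(2 : ℤ) • y‖ ≤ 2 * ‖y‖ := by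
  rw [two_smul, two_mul]; exact norm_add_le y y

/-- Doubling does not wrap around within distance `1/4` of `0`. -/
lemma norm_two_smul {y : Circle1} (h : ‖y‖ ≤ 1 / 4) : ‖(2 : ℤ) • y‖ = 2 * ‖y‖ := by
  obtain ⟨t, rfl, ht⟩ := exists_lift y
  rw [← ht] at h ⊢
  have e : (2 : ℤ) • t = 2 * t := by simp
  have e2 : |2 * t| = 2 * |t| := by rw [abs_mul]; norm_num
  rw [← AddCircle.coe_zsmul, e, norm_coe_of_le (by rw [e2]; linarith), e2]

/-- The set `K_{a,3}`. -/
def KSet (a : ℕ → ℕ) : Set Circle1 :=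
  {0} ∪ {x : Circle1 | ∃ n : ℕ, x = pt (a n + 1) ∨ x = -pt (a n + 1)}

lemma subset_qcHull (E : Set Circle1) : E ⊆ qcHull E := fun x hx _ hχ => hχ.2 x hx

lemma norm_of_mem_KSet {a : ℕ → ℕ} {x : Circle1} (hx : x ∈ KSet a) :
    x = 0 ∨ ∃ k, 1 ≤ k ∧ ‖x‖ = ((3 : ℝ) ^ k)⁻¹ := by
  rcases hx with h | ⟨n, rfl | rfl⟩
  · exact Or.inl h
  · exact Or.inr ⟨a n + 1, by omega, norm_pt (by omega)⟩
  · exact Or.inr ⟨a n + 1, by omega, by rw [norm_neg, norm_pt (by omega)]⟩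

/-- A point of the hull is tested by the integer multiplications, provided they map every
`3^{-(aₙ+1)}` into `𝕋₊`. -/
lemma hull_test {a : ℕ → ℕ} {x : Circle1} (hx : x ∈ qcHull (KSet a)) (m : ℤ)
    (hm : ∀ n, ‖m • pt (a n + 1)‖ ≤ 1 / 4) : ‖m • x‖ ≤ 1 / 4 := by
  have := hx (zsmulAddGroupHom m) ⟨continuous_zsmul m, ?_⟩
  · exact (mem_Tplus_iff _).1 this
  · rintro y (hy | ⟨n, rfl | rfl⟩)
    · rw [Set.mem_singleton_iff] at hy
      subst hy
      rw [mem_Tplus_iff, map_zero, norm_zero]; norm_num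
    · exact (mem_Tplus_iff _).2 (hm n)
    · rw [mem_Tplus_iff, map_neg, norm_neg]; exact hm n

/-! ### Necessity -/

lemma necessity_zero (a : ℕ → ℕ) (ha : StrictMono a) (h : qcHull (KSet a) = KSet a) :
    0 < a 0 := by
  by_contra h0
  have h0 : a 0 = 0 := by omega
  have h1 : 1 ≤ a 1 := by have := ha (show 0 < 1 by norm_num); omega
  have hmem : pt 1 + pt (a 1 + 1) ∈ qcHull (KSet a) := by
    intro χ hχ
    have hx0 : χ (pt 1) ∈ Tplus := hχ.2 _ (Or.inr ⟨0, Or.inl (by rw [h0])⟩)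
    have hx1 : χ (pt (a 1 + 1)) ∈ Tplus := hχ.2 _ (Or.inr ⟨1, Or.inl rfl⟩)
    have h3 : (3 : ℤ) • χ (pt 1) = 0 := by
      have := pow_smul_pt_of_le (le_refl 1)
      rw [pow_one] at this
      rw [← map_zsmul, this, map_zero]
    have hz : χ (pt 1) = 0 := by
      have := norm_three ((mem_Tplus_iff _).1 hx0) (by rw [h3, norm_zero]; norm_num)
      rw [h3, norm_zero] at this
      rw [← norm_eq_zero]; linarith
    rw [map_add, hz, zero_add]
    exact hx1
  rw [h] at hmem
  have hp : (0 : ℝ) < (3 ^ (a 1 + 1))⁻¹ := by positivity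
  have hle : ((3 : ℝ) ^ (a 1 + 1))⁻¹ ≤ (3 ^ 2)⁻¹ :=
    inv_anti₀ (by positivity) (pow_le_pow_right₀ (by norm_num) (by omega))
  have hn : ‖pt 1 + pt (a 1 + 1)‖ = 1 / 3 + ((3 : ℝ) ^ (a 1 + 1))⁻¹ := by
    have hpos : (0 : ℝ) < (3 ^ 1)⁻¹ + (3 ^ (a 1 + 1))⁻¹ := by positivity
    unfold pt circleProj
    rw [← AddCircle.coe_add, norm_coe_of_le, abs_of_pos hpos]
    · norm_num
    · rw [abs_of_pos hpos]; norm_num at hle ⊢; linarith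
  rcases norm_of_mem_KSet hmem with hz | ⟨k, hk, hz⟩
  · rw [hz, norm_zero] at hn; linarith
  · have : ((3 : ℝ) ^ k)⁻¹ ≤ (3 ^ 1)⁻¹ :=
      inv_anti₀ (by positivity) (pow_le_pow_right₀ (by norm_num) hk)
    rw [hn] at hz
    norm_num at this
    linarith

lemma necessity_gap (a : ℕ → ℕ) (ha : StrictMono a) (h : qcHull (KSet a) = KSet a) (n : ℕ) :
    1 < a (n + 1) - a n := by
  by_contra hc
  have hs : a n < a (n + 1) := ha (Nat.lt_succ_self n)
  have he : a (n + 1) = a n + 1 := by omega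
  have hmem : (2 : ℤ) • pt (a n + 2) ∈ qcHull (KSet a) := by
    intro χ hχ
    set t := χ (pt (a n + 2)) with ht
    have h1 : ‖t‖ ≤ 1 / 4 :=
      (mem_Tplus_iff _).1 (hχ.2 _ (Or.inr ⟨n + 1, Or.inl (by rw [he])⟩))
    have e3 : (3 : ℤ) • t = χ (pt (a n + 1)) := by
      have := pow_smul_pt 1 (a n + 1)
      rw [pow_one, show 1 + (a n + 1) = a n + 2 by ring] at this
      rw [ht, ← map_zsmul, this]
    have h3 : ‖(3 : ℤ) • t‖ ≤ 1 / 4 := by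
      rw [e3]
      exact (mem_Tplus_iff _).1 (hχ.2 _ (Or.inr ⟨n, Or.inl rfl⟩))
    rw [map_zsmul, mem_Tplus_iff]
    refine (norm_two_smul_le t).trans ?_
    rcases h3.lt_or_eq with h3 | h3
    · linarith [norm_three h1 h3]
    -- In the boundary case `3t = ± 1/4` has order `4`, contradicting `3`-power torsion.
    · exfalso
      set w := (3 : ℤ) • t with hw
      have w3 : (3 ^ (a n + 1) : ℤ) • w = 0 := by
        rw [e3, ← map_zsmul, pow_smul_pt_of_le le_rfl, map_zero]
      have w4 : (4 : ℤ) • w = 0 := by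
        obtain ⟨r, hr, hr'⟩ := exists_lift w
        rw [h3] at hr'
        rw [← hr, ← AddCircle.coe_zsmul, AddCircle.coe_eq_zero_iff]
        rcases (abs_eq (by norm_num)).1 hr' with rfl | rfl
        · exact ⟨1, by norm_num⟩
        · exact ⟨-1, by norm_num⟩
      have hcop : IsCoprime (4 : ℤ) (3 ^ (a n + 1)) := by
        apply IsCoprime.pow_right
        exact ⟨1, -1, by norm_num⟩
      obtain ⟨u, v, huv⟩ := hcop
      have : w = 0 := by
        calc w = (u * 4 + v * 3 ^ (a n + 1)) • w := by rw [huv, one_smul]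
          _ = 0 := by rw [add_smul, mul_smul, mul_smul, w3, w4, smul_zero, smul_zero, add_zero]
      rw [this, norm_zero] at h3
      norm_num at h3
  rw [h] at hmem
  have hn : ‖(2 : ℤ) • pt (a n + 2)‖ = 2 * ((3 : ℝ) ^ (a n + 2))⁻¹ := by
    rw [norm_two_smul, norm_pt (by omega)]
    refine (norm_pt_le (d := 2) (by norm_num) (by omega)).trans (by norm_num)
  rcases norm_of_mem_KSet hmem with hz | ⟨k, hk, hz⟩
  · rw [hz, norm_zero] at hn
    have : (0 : ℝ) < (3 ^ (a n + 2))⁻¹ := by positivity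
    linarith
  · rw [hn] at hz
    -- Parity: `2 * 3^k` is not a power of `3`.
    have h2 : (2 : ℝ) * 3 ^ k = 3 ^ (a n + 2) := by
      field_simp at hz
      linarith
    have h2' : 2 * 3 ^ k = 3 ^ (a n + 2) := by exact_mod_cast h2
    have hodd : Odd (3 ^ (a n + 2)) := Odd.pow (by decide)
    rw [← h2'] at hodd
    exact (Nat.not_odd_iff_even.2 (even_two_mul _)) hodd

/-! ### Sufficiency -/

lemma gap_lt {a : ℕ → ℕ} (hg : ∀ n : ℕ, 1 < a (n + 1) - a n) {i n : ℕ} (h : i < n) :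
    a i + 2 ≤ a n := by
  induction n with
  | zero => omega
  | succ n ih =>
    have := hg n
    rcases Nat.lt_succ_iff_lt_or_eq.1 h with h | rfl
    · have := ih h; omega
    · omega

lemma norm_le_eighth {a : ℕ → ℕ} {x : Circle1} (hx : x ∈ qcHull (KSet a)) {j : ℕ}
    (hj : ∀ n, a n ≠ j) : ‖(3 ^ j : ℤ) • x‖ ≤ 1 / 8 := by
  have hpt : ∀ n, ‖(3 ^ j : ℤ) • pt (a n + 1)‖ ≤ 1 / 9 := by
    intro n
    have := hj n
    rcases Nat.lt_or_ge j (a n + 1) with h | h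
    · refine (norm_pow_smul_pt_le (d := 2) (by norm_num) (by omega)).trans (by norm_num)
    · rw [pow_smul_pt_of_le h, norm_zero]; norm_num
  have h1 : ‖(3 ^ j : ℤ) • x‖ ≤ 1 / 4 :=
    hull_test hx _ fun n => (hpt n).trans (by norm_num)
  have h2 : ‖((2 : ℤ) * 3 ^ j) • x‖ ≤ 1 / 4 := by
    refine hull_test hx _ fun n => ?_
    rw [mul_smul]
    refine (norm_two_smul_le _).trans ?_
    linarith [hpt n]
  rw [mul_smul, norm_two_smul h1] at h2
  linarith

/-- The characters `2·3^{aₙ-1} + 2ε·3^{aₗ-1}` lie in the polar, hence bound points of the hull. -/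
lemma norm_pair {a : ℕ → ℕ} {x : Circle1} (hx : x ∈ qcHull (KSet a)) (h0 : 0 < a 0)
    (hg : ∀ n : ℕ, 1 < a (n + 1) - a n) {n l : ℕ} (hnl : n < l) {ε : ℤ} (hε : ε = 1 ∨ ε = -1) :
    ‖(2 : ℤ) • ((3 ^ (a n - 1) : ℤ) • x + ε • (3 ^ (a l - 1) : ℤ) • x)‖ ≤ 1 / 4 := by
  have hpos : ∀ i, 0 < a i := by
    intro i
    rcases Nat.eq_zero_or_pos i with rfl | hi
    · exact h0
    · have := gap_lt hg hi; omega
  have key := hull_test hx (2 * (3 ^ (a n - 1) + ε * 3 ^ (a l - 1))) ?_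
  · rwa [mul_smul, add_smul, mul_smul] at key
  intro i
  rw [mul_smul, add_smul, mul_smul]
  refine (norm_two_smul_le _).trans ?_
  have hε' : ∀ y : Circle1, ‖ε • y‖ = ‖y‖ := by
    intro y
    rcases hε with rfl | rfl <;> simp
  have tri := norm_add_le ((3 ^ (a n - 1) : ℤ) • pt (a i + 1))
    (ε • (3 ^ (a l - 1) : ℤ) • pt (a i + 1))
  rw [hε'] at tri
  have big : ∀ r, i < r → ‖(3 ^ (a r - 1) : ℤ) • pt (a i + 1)‖ = 0 := by
    intro r hr
    have := gap_lt hg hr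
    rw [pow_smul_pt_of_le (by omega), norm_zero]
  have eqq : ‖(3 ^ (a i - 1) : ℤ) • pt (a i + 1)‖ ≤ 1 / 9 := by
    have := hpos i
    refine (norm_pow_smul_pt_le (d := 2) (by norm_num) (by omega)).trans (by norm_num)
  have small : ∀ r, r < i → ‖(3 ^ (a r - 1) : ℤ) • pt (a i + 1)‖ ≤ 1 / 81 := by
    intro r hr
    have := gap_lt hg hr
    have := hpos r
    refine (norm_pow_smul_pt_le (d := 4) (by norm_num) (by omega)).trans (by norm_num)
  -- The extremal index is `i = l`, with value `2/9 + 2/81 = 20/81 < 1/4`.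
  rcases lt_trichotomy i n with hin | rfl | hin
  · linarith [big n hin, big l (hin.trans hnl)]
  · linarith [eqq, big l hnl]
  · rcases lt_trichotomy i l with hil | rfl | hil
    · linarith [small n hin, big l hil]
    · linarith [small n hin]
    · linarith [small n hin, small l hil]

lemma sufficiency (a : ℕ → ℕ) (h0 : 0 < a 0) (hg : ∀ n : ℕ, 1 < a (n + 1) - a n) :
    qcHull (KSet a) ⊆ KSet a := by
  intro x hx
  have hpos : ∀ i, 0 < a i := by
    intro i
    rcases Nat.eq_zero_or_pos i with rfl | hi
    · exact h0
    · have := gap_lt hg hi; omega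
  have hnot : ∀ i n, a i ≠ a n - 1 ∧ a i ≠ a n + 1 := by
    intro i n
    have := hpos n
    rcases lt_trichotomy i n with h | rfl | h
    · have := gap_lt hg h; omega
    · omega
    · have := gap_lt hg h; omega
  have hdig : ∀ n, ∃ c : ℤ, (c = 0 ∨ c = 1 ∨ c = -1) ∧
      ‖(3 ^ (a n - 1) : ℤ) • x - (((c : ℝ) / 9 : ℝ) : Circle1)‖ ≤ 1 / 72 := by
    intro n
    refine digit (norm_le_eighth hx fun i => (hnot i n).1) ?_
    have e : (9 : ℤ) * 3 ^ (a n - 1) = 3 ^ (a n + 1) := by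
      obtain ⟨b, hb⟩ := Nat.exists_eq_succ_of_ne_zero (hpos n).ne'
      rw [hb, Nat.succ_sub_one, Nat.succ_eq_add_one]; ring
    rw [← mul_smul, e]
    exact norm_le_eighth hx fun i => (hnot i n).2
  choose c hc hcn using hdig
  have pow_pred : ∀ n, (3 ^ a n : ℤ) = 3 * 3 ^ (a n - 1) := by
    intro n
    rw [← pow_succ', Nat.sub_add_cancel (hpos n)]
  have three_le : ∀ y : Circle1, ‖(3 : ℤ) • y‖ ≤ 3 * ‖y‖ := by
    intro y
    rw [show (3 : ℤ) • y = (2 : ℤ) • y + y by module]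
    linarith [norm_add_le ((2 : ℤ) • y) y, norm_two_smul_le y]
  have hzero : ∀ n, c n = 0 → ‖(3 ^ a n : ℤ) • x‖ ≤ 1 / 8 := by
    intro n hn
    have := hcn n
    rw [hn, Int.cast_zero, zero_div, AddCircle.coe_zero, sub_zero] at this
    rw [pow_pred, mul_smul]
    linarith [three_le ((3 ^ (a n - 1) : ℤ) • x)]
  have htwo : ∀ n l, n < l → c n ≠ 0 → c l ≠ 0 → False := by
    intro n l hnl hn hl
    have hn' : c n = 1 ∨ c n = -1 := (hc n).resolve_left hn
    have hl' : c l = 1 ∨ c l = -1 := (hc l).resolve_left hl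
    obtain ⟨ε, hε, hεc⟩ : ∃ ε : ℤ, (ε = 1 ∨ ε = -1) ∧ ε * c l = c n := by
      refine ⟨c n * c l, ?_, ?_⟩ <;> rcases hn' with h | h <;> rcases hl' with h' | h' <;>
        rw [h, h'] <;> norm_num
    have hm := norm_pair hx h0 hg hnl hε
    set y := (3 ^ (a n - 1) : ℤ) • x
    set y' := (3 ^ (a l - 1) : ℤ) • x
    set d : Circle1 := (((c n : ℝ) / 9 : ℝ) : Circle1) with hd
    set d' : Circle1 := (((c l : ℝ) / 9 : ℝ) : Circle1) with hd'
    have hdd : ε • d' = d := by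
      rw [hd, hd', ← AddCircle.coe_zsmul, ← hεc]
      congr 1
      rw [zsmul_eq_mul]; push_cast; ring
    have e1 : (2 : ℤ) • (y + ε • y') =
        (4 : ℤ) • d + (2 : ℤ) • ((y - d) + ε • (y' - d')) := by
      rw [smul_sub, hdd]; module
    have e2 : ‖(4 : ℤ) • d‖ = 4 / 9 := by
      have e : (4 : ℤ) • ((c n : ℝ) / 9) = 4 * (c n : ℝ) / 9 := by
        rw [zsmul_eq_mul]; push_cast; ring
      have ha : |4 * (c n : ℝ) / 9| = 4 / 9 := by
        rcases hn' with h | h <;> rw [h] <;> norm_num [abs_div]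
      rw [hd, ← AddCircle.coe_zsmul, e, norm_coe_of_le (by rw [ha]; norm_num), ha]
    have e3 : ‖ε • (y' - d')‖ = ‖y' - d'‖ := by
      rcases hε with h | h <;> rw [h]
      · rw [one_smul]
      · rw [neg_one_smul, norm_neg]
    have e4 := norm_two_smul_le ((y - d) + ε • (y' - d'))
    have e5 := norm_add_le (y - d) (ε • (y' - d'))
    have e6 := norm_sub_le_norm_add ((4 : ℤ) • d) ((2 : ℤ) • ((y - d) + ε • (y' - d')))
    rw [← e1, e2] at e6
    have := hcn n
    have := hcn l
    linarith
  by_cases hall : ∀ n, c n = 0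
  · left
    refine eq_zero_of_forall_pow fun j => ?_
    by_cases hj : ∃ n, a n = j
    · obtain ⟨n, rfl⟩ := hj
      linarith [hzero n (hall n)]
    · push Not at hj
      linarith [norm_le_eighth hx hj]
  · push Not at hall
    obtain ⟨n, hn⟩ := hall
    have hother : ∀ i, i ≠ n → c i = 0 := by
      intro i hi
      by_contra hci
      rcases lt_or_gt_of_ne hi with h | h
      · exact htwo i n h hci hn
      · exact htwo n i h hn hci
    have hoff : ∀ j, j ≠ a n → ‖(3 ^ j : ℤ) • x‖ ≤ 1 / 8 := by
      intro j hj
      by_cases hj' : ∃ i, a i = j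
      · obtain ⟨i, rfl⟩ := hj'
        exact hzero i (hother i (by rintro rfl; exact hj rfl))
      · push Not at hj'
        exact norm_le_eighth hx hj'
    have hn' : c n = 1 ∨ c n = -1 := (hc n).resolve_left hn
    have hcsmul : ∀ y : Circle1, ‖c n • y‖ = ‖y‖ := by
      intro y
      rcases hn' with h | h <;> rw [h] <;> simp
    have hz : x - c n • pt (a n + 1) = 0 := by
      refine eq_zero_of_forall_pow fun j => ?_
      rw [smul_sub, smul_comm]
      have tri := norm_sub_le ((3 ^ j : ℤ) • x) (c n • (3 ^ j : ℤ) • pt (a n + 1))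
      rw [hcsmul] at tri
      rcases lt_trichotomy j (a n) with hj | rfl | hj
      · have := hoff j hj.ne
        have h9 : ‖(3 ^ j : ℤ) • pt (a n + 1)‖ ≤ 1 / 9 :=
          (norm_pow_smul_pt_le (d := 2) (by norm_num) (by omega)).trans (by norm_num)
        linarith
      · have e : c n • (3 ^ (a n - 1) : ℤ) • pt (a n + 1) =
            (((c n : ℝ) / 9 : ℝ) : Circle1) := by
          have hk : a n + 1 = (a n - 1) + 2 := by have := hpos n; omega
          have := pow_smul_pt (a n - 1) 2
          rw [← hk] at this
          rw [this]
          unfold pt circleProj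
          rw [← AddCircle.coe_zsmul]
          congr 1
          rw [zsmul_eq_mul]; norm_num; ring
        rw [pow_pred, mul_smul, mul_smul, smul_comm (c n) (3 : ℤ), e, ← smul_sub]
        linarith [three_le ((3 ^ (a n - 1) : ℤ) • x - (((c n : ℝ) / 9 : ℝ) : Circle1)), hcn n]
      · have := hoff j hj.ne'
        rw [pow_smul_pt_of_le (by omega : a n + 1 ≤ j), norm_zero] at tri
        rw [pow_smul_pt_of_le (by omega : a n + 1 ≤ j)]
        linarith
    right
    refine ⟨n, ?_⟩
    have hx' := sub_eq_zero.1 hz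
    rcases hn' with h | h
    · left; rw [hx', h, one_smul]
    · right; rw [hx', h, neg_one_smul]

/-- Theorem C: `K_{a,3}` is quasi-convex in `𝕋` iff (i) `a₀ > 0` and
(ii) the gaps `gₙ = a_{n+1} - aₙ` satisfy `gₙ > 1` for all `n`. -/
theorem stmt2 (a : ℕ → ℕ) (ha : StrictMono a) :
    IsQuasiConvex ({0} ∪ {x : Circle1 | ∃ n : ℕ,
        x = circleProj (((3 : ℝ) ^ (a n + 1))⁻¹) ∨
        x = -circleProj (((3 : ℝ) ^ (a n + 1))⁻¹)}) ↔
      (0 < a 0 ∧ ∀ n : ℕ, 1 < a (n + 1) - a n) := by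
  change qcHull (KSet a) = KSet a ↔ _
  exact ⟨fun h => ⟨necessity_zero a ha h, necessity_gap a ha h⟩,
    fun h => Set.Subset.antisymm (sufficiency a h.1 h.2) (subset_qcHull _)⟩
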